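/- Sperner's Lemma for the standard triangulation: let n ≥ 2 and let c be a 3-coloring (with colors 0, 1, 2) of the vertex set {(i,j) ∈ ℕ × ℕ : i + j ≤ n − 1} of the standard triangulation of size n that is c-admissible, i.e., c(0,0) = 0, c(n−1,0) = 1, c(0,n−1) = 2, and moreover c(i,0) ∈ {0,1} for all i ≤ n−1, c(0,j) ∈ {0,2} for all j ≤ n−1, and c(i, n−1−i) ∈ {1,2} for all i ≤ n−1. Then the triangulation contains a three-colored elementary triangle: there exist natural numbers i, j such that either i + j ≤ n − 2 and the three colors c(i,j), c(i+1,j), c(i,j+1) are pairwise distinct, or i + j ≤ n − 3 and the three colors c(i+1,j), c(i,j+1), c(i+1,j+1) are pairwise distinct. -/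

import Mathlib

/-!
Attach to every oriented edge `xy` a sign: `1` if its colors are `0, 1` in this order, `-1` if they
are `1, 0`, and `0` otherwise. The sign changes with the orientation, so summing the signs around
all elementary triangles, oriented counterclockwise, leaves only the boundary of the big triangle.
There the side from `A` to `B` telescopes to `1` and the other two sides contribute nothing. Hence
some elementary triangle has a nonzero sum, and a triangle with a repeated color has sum `0`.
-/

open Finset

section Circulation

variable {α G : Type*} [AddCommGroup G] {w : α → α → G}

/-- The sum of the edge weights `w` around the oriented triangle `x → y → z → x`. -/
def circulation (w : α → α → G) (x y z : α) : G :=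
  w x y + w y z + w z x

/-- The circulation around the upward elementary triangle with lower left corner `p`, oriented
counterclockwise; `w` weighs an edge through the labels `c` of its ends. -/
def upCirculation (w : α → α → G) (c : ℕ → ℕ → α) (p : ℕ × ℕ) : G :=
  circulation w (c p.1 p.2) (c (p.1 + 1) p.2) (c p.1 (p.2 + 1))

/-- The circulation around the downward elementary triangle with upper right corner `p + (1, 1)`,
oriented counterclockwise. -/
def downCirculation (w : α → α → G) (c : ℕ → ℕ → α) (p : ℕ × ℕ) : G :=
  circulation w (c (p.1 + 1) p.2) (c (p.1 + 1) (p.2 + 1)) (c p.1 (p.2 + 1))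

/-- The circulation around the triangle with corners `(0, 0)`, `(m + 1, 0)`, `(0, m + 1)`, oriented
counterclockwise. The side length is `m + 1` because the edges of the hypotenuse are then indexed by
`antidiagonal m`. -/
def boundaryCirculation (w : α → α → G) (c : ℕ → ℕ → α) (m : ℕ) : G :=
  ∑ i ∈ range (m + 1), w (c i 0) (c (i + 1) 0) +
    ∑ p ∈ antidiagonal m, w (c (p.1 + 1) p.2) (c p.1 (p.2 + 1)) +
    ∑ j ∈ range (m + 1), w (c 0 (j + 1)) (c 0 j)

lemma pairwise_ne_of_circulation_ne_zero (hself : ∀ x, w x x = 0)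
    (hswap : ∀ x y, w y x = -w x y) {x y z : α} (h : circulation w x y z ≠ 0) :
    x ≠ y ∧ x ≠ z ∧ y ≠ z := by
  refine ⟨?_, ?_, ?_⟩ <;> rintro rfl <;> apply h
  · simp [circulation, hself, hswap x z]
  · simp [circulation, hself, hswap x y]
  · simp [circulation, hself, hswap x y]

lemma sum_antidiagonal_circulation_eq_sub (hswap : ∀ x y, w y x = -w x y)
    (c : ℕ → ℕ → α) (m : ℕ) :
    ∑ p ∈ antidiagonal (m + 1), upCirculation w c p + ∑ p ∈ antidiagonal m, downCirculation w c p =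
      boundaryCirculation w c (m + 1) - boundaryCirculation w c m := by
  have horizontal : ∑ p ∈ antidiagonal (m + 1), w (c p.1 p.2) (c (p.1 + 1) p.2) =
      w (c (m + 1) 0) (c (m + 2) 0) -
        ∑ p ∈ antidiagonal m, w (c (p.1 + 1) (p.2 + 1)) (c p.1 (p.2 + 1)) := by
    simp only [Nat.sum_antidiagonal_succ', sub_eq_add_neg, ← sum_neg_distrib, ← hswap]
  have vertical : ∑ p ∈ antidiagonal (m + 1), w (c p.1 (p.2 + 1)) (c p.1 p.2) =
      w (c 0 (m + 2)) (c 0 (m + 1)) -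
        ∑ p ∈ antidiagonal m, w (c (p.1 + 1) p.2) (c (p.1 + 1) (p.2 + 1)) := by
    simp only [Nat.sum_antidiagonal_succ, sub_eq_add_neg, ← sum_neg_distrib, ← hswap]
  have diagonal : ∑ p ∈ antidiagonal m, w (c p.1 (p.2 + 1)) (c (p.1 + 1) p.2) =
      -∑ p ∈ antidiagonal m, w (c (p.1 + 1) p.2) (c p.1 (p.2 + 1)) := by
    simp only [← sum_neg_distrib, ← hswap]
  simp only [upCirculation, downCirculation, boundaryCirculation, circulation, sum_add_distrib,
    horizontal, vertical, diagonal, sum_range_succ _ (m + 1)]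
  abel

/-- Discrete Green theorem: every interior edge is traversed once in each direction. -/
theorem sum_circulation_eq_boundaryCirculation (hswap : ∀ x y, w y x = -w x y)
    (c : ℕ → ℕ → α) (m : ℕ) :
    ∑ k ∈ range (m + 1), ∑ p ∈ antidiagonal k, upCirculation w c p +
      ∑ k ∈ range m, ∑ p ∈ antidiagonal k, downCirculation w c p = boundaryCirculation w c m := by
  induction m with
  | zero => simp [upCirculation, boundaryCirculation, circulation]
  | succ m ih =>
    rw [sum_range_succ _ (m + 1),
      sum_range_succ (fun k ↦ ∑ p ∈ antidiagonal k, downCirculation w c p), add_add_add_comm, ih,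
      sum_antidiagonal_circulation_eq_sub hswap, add_sub_cancel]

lemma exists_circulation_ne_zero (hswap : ∀ x y, w y x = -w x y) {c : ℕ → ℕ → α} {m : ℕ}
    (h : boundaryCirculation w c m ≠ 0) :
    ∃ i j : ℕ, (i + j ≤ m ∧ upCirculation w c (i, j) ≠ 0) ∨
      (i + j + 1 ≤ m ∧ downCirculation w c (i, j) ≠ 0) := by
  contrapose! h
  rw [← sum_circulation_eq_boundaryCirculation hswap]
  have up_eq_zero : ∀ k ∈ range (m + 1), ∑ p ∈ antidiagonal k, upCirculation w c p = 0 :=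
    fun k hk ↦ sum_eq_zero fun p hp ↦ (h p.1 p.2).1 <| by
      rw [mem_antidiagonal.1 hp]; exact mem_range_succ_iff.1 hk
  have down_eq_zero : ∀ k ∈ range m, ∑ p ∈ antidiagonal k, downCirculation w c p = 0 :=
    fun k hk ↦ sum_eq_zero fun p hp ↦ (h p.1 p.2).2 <| by
      rw [mem_antidiagonal.1 hp]; exact mem_range.1 hk
  rw [sum_eq_zero up_eq_zero, sum_eq_zero down_eq_zero, add_zero]

end Circulation

section EdgeSign

variable {α : Type*} [DecidableEq α] {a b x y : α}

/-- The sign of an oriented edge with colors `x` and `y`: `1` if it runs from `a` to `b`, `-1` if it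
runs from `b` to `a`, and `0` otherwise. As a difference of indicators it is alternating even if
`a = b`. -/
def edgeSign (a b x y : α) : ℤ :=
  (if x = a ∧ y = b then 1 else 0) - (if x = b ∧ y = a then 1 else 0)

lemma edgeSign_self (a b x : α) : edgeSign a b x x = 0 := by
  simp [edgeSign, and_comm]

lemma edgeSign_swap (a b x y : α) : edgeSign a b y x = -edgeSign a b x y := by
  simp [edgeSign, and_comm]

lemma edgeSign_eq_zero_of_ne_left (hx : x ≠ a) (hy : y ≠ a) : edgeSign a b x y = 0 := by
  simp [edgeSign, hx, hy]

lemma edgeSign_eq_zero_of_ne_right (hx : x ≠ b) (hy : y ≠ b) : edgeSign a b x y = 0 := by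
  simp [edgeSign, hx, hy]

lemma edgeSign_eq_sub (hab : a ≠ b) (hx : x = a ∨ x = b) (hy : y = a ∨ y = b) :
    edgeSign a b x y = (if y = b then 1 else 0) - (if x = b then 1 else 0) := by
  rcases hx with rfl | rfl <;> rcases hy with rfl | rfl <;> simp [edgeSign, hab, hab.symm]

lemma boundaryCirculation_edgeSign_eq_one {m : ℕ} {c : ℕ → ℕ → α}
    (hbottom : ∀ i ≤ m + 1, c i 0 = a ∨ c i 0 = b) (hleft : ∀ j ≤ m + 1, c 0 j ≠ b)
    (hdiag : ∀ i j, i + j = m + 1 → c i j ≠ a) :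
    boundaryCirculation (edgeSign a b) c m = 1 := by
  have corner_left : c 0 0 ≠ b := hleft 0 (Nat.zero_le _)
  have corner_right : c (m + 1) 0 = b := (hbottom _ le_rfl).resolve_left (hdiag _ 0 rfl)
  have hab : a ≠ b := corner_right ▸ (hdiag (m + 1) 0 rfl).symm
  have bottom : ∑ i ∈ range (m + 1), edgeSign a b (c i 0) (c (i + 1) 0) = 1 := by
    calc ∑ i ∈ range (m + 1), edgeSign a b (c i 0) (c (i + 1) 0)
        = ∑ i ∈ range (m + 1), ((if c (i + 1) 0 = b then 1 else 0) - if c i 0 = b then 1 else 0) :=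
          sum_congr rfl fun i hi ↦ by
            have := mem_range.1 hi
            exact edgeSign_eq_sub hab (hbottom i (by lia)) (hbottom (i + 1) (by lia))
      _ = (if c (m + 1) 0 = b then 1 else 0) - if c 0 0 = b then 1 else 0 :=
          sum_range_sub (fun i ↦ if c i 0 = b then (1 : ℤ) else 0) (m + 1)
      _ = 1 := by simp [corner_left, corner_right]
  have diagonal :
      ∑ p ∈ antidiagonal m, edgeSign a b (c (p.1 + 1) p.2) (c p.1 (p.2 + 1)) = 0 :=
    sum_eq_zero fun p hp ↦ by
      have := mem_antidiagonal.1 hp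
      exact edgeSign_eq_zero_of_ne_left (hdiag _ _ (by lia)) (hdiag _ _ (by lia))
  have left : ∑ j ∈ range (m + 1), edgeSign a b (c 0 (j + 1)) (c 0 j) = 0 :=
    sum_eq_zero fun j hj ↦ by
      have := mem_range.1 hj
      exact edgeSign_eq_zero_of_ne_right (hleft _ (by lia)) (hleft _ (by lia))
  rw [boundaryCirculation, bottom, diagonal, left, add_zero, add_zero]

end EdgeSign

/-- Sperner's lemma with an arbitrary set of colors, for the triangle of side length `m + 1`: in the
classical setting `a = 0` and `b = 1`, and all other colors play the role of the color `2`. -/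
theorem sperner_standard_triangulation_general {α : Type*} {a b : α} {m : ℕ} {c : ℕ → ℕ → α}
    (hbottom : ∀ i ≤ m + 1, c i 0 = a ∨ c i 0 = b) (hleft : ∀ j ≤ m + 1, c 0 j ≠ b)
    (hdiag : ∀ i j, i + j = m + 1 → c i j ≠ a) :
    ∃ i j : ℕ,
      (i + j ≤ m ∧
        c i j ≠ c (i + 1) j ∧ c i j ≠ c i (j + 1) ∧ c (i + 1) j ≠ c i (j + 1)) ∨
      (i + j + 1 ≤ m ∧
        c (i + 1) j ≠ c i (j + 1) ∧ c (i + 1) j ≠ c (i + 1) (j + 1) ∧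
          c i (j + 1) ≠ c (i + 1) (j + 1)) := by
  classical
  have boundary_ne_zero : boundaryCirculation (edgeSign a b) c m ≠ 0 := by
    simp [boundaryCirculation_edgeSign_eq_one hbottom hleft hdiag]
  have ne_of_circulation {x y z : α} (h : circulation (edgeSign a b) x y z ≠ 0) :
      x ≠ y ∧ x ≠ z ∧ y ≠ z :=
    pairwise_ne_of_circulation_ne_zero (edgeSign_self a b) (edgeSign_swap a b) h
  obtain ⟨i, j, ⟨hij, hup⟩ | ⟨hij, hdown⟩⟩ :=
    exists_circulation_ne_zero (edgeSign_swap a b) boundary_ne_zero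
  · exact ⟨i, j, .inl ⟨hij, ne_of_circulation hup⟩⟩
  · obtain ⟨hright, hdiagonal, htop⟩ := ne_of_circulation hdown
    exact ⟨i, j, .inr ⟨hij, hdiagonal, hright, htop.symm⟩⟩

/-- Sperner's Lemma for the standard triangulation of size `n`:
every c-admissible 3-coloring of the vertices `{(i,j) : i + j ≤ n - 1}`
contains a three-colored elementary triangle. -/
theorem sperner_standard_triangulation
    (n : ℕ) (hn : 2 ≤ n)
    (c : ℕ → ℕ → Fin 3)
    (hA : c 0 0 = 0)
    (hB : c (n - 1) 0 = 1)
    (hC : c 0 (n - 1) = 2)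
    (hside01 : ∀ i : ℕ, i ≤ n - 1 → c i 0 = 0 ∨ c i 0 = 1)
    (hside02 : ∀ j : ℕ, j ≤ n - 1 → c 0 j = 0 ∨ c 0 j = 2)
    (hside12 : ∀ i : ℕ, i ≤ n - 1 → c i (n - 1 - i) = 1 ∨ c i (n - 1 - i) = 2) :
    ∃ i j : ℕ,
      (i + j ≤ n - 2 ∧
        c i j ≠ c (i + 1) j ∧ c i j ≠ c i (j + 1) ∧ c (i + 1) j ≠ c i (j + 1)) ∨
      (i + j ≤ n - 3 ∧
        c (i + 1) j ≠ c i (j + 1) ∧ c (i + 1) j ≠ c (i + 1) (j + 1) ∧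
          c i (j + 1) ≠ c (i + 1) (j + 1)) := by
  obtain ⟨m, rfl⟩ := Nat.exists_eq_add_of_le' hn
  obtain ⟨i, j, h⟩ := sperner_standard_triangulation_general (m := m) hside01
    (fun j hj h ↦ by simpa [h] using hside02 j hj)
    (fun i j hij h ↦ by
      obtain rfl : j = m + 1 - i := by lia
      simpa [h] using hside12 i (by lia))
  exact ⟨i, j, h.imp_right (And.imp_left Nat.le_sub_one_of_lt)⟩
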